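/- Let G be a simple graph on a finite vertex set V and let u, v be adjacent vertices of G. Then for every vertex w ∈ V: N_{G∧uv}(w) = N_G(w) Δ N_G[u] Δ N_G[v] if w ∈ N_G[u] ∩ N_G[v]; N_{G∧uv}(w) = N_G(w) Δ N_G[v] if w ∈ N_G[u] ∖ N_G[v]; N_{G∧uv}(w) = N_G(w) Δ N_G[u] if w ∈ N_G[v] ∖ N_G[u]; and N_{G∧uv}(w) = N_G(w) otherwise. -/

import Mathlib

open Finset symmDiff

variable {V : Type*}

/-- The neighbourhood of a vertex as a `Finset`. -/
def nbhd [Fintype V] [DecidableEq V] (G : SimpleGraph V) [DecidableRel G.Adj] (v : V) :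
    Finset V :=
  Finset.univ.filter (G.Adj v)

/-- The odd neighbourhood of a set of vertices: all vertices with an odd number of
neighbours in `A`. -/
def oddNbhd [Fintype V] [DecidableEq V] (G : SimpleGraph V) [DecidableRel G.Adj]
    (A : Finset V) : Finset V :=
  Finset.univ.filter fun w => Odd (A.filter (G.Adj w)).card

/-- Local complementation of `G` at the vertex `u`. -/
def localComp (G : SimpleGraph V) (u : V) : SimpleGraph V where
  Adj v w := v ≠ w ∧ Xor' (G.Adj v w) (G.Adj u v ∧ G.Adj u w)
  symm := by
    refine ⟨?_⟩
    rintro v w ⟨h1, h2⟩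
    exact ⟨h1.symm, by rwa [G.adj_comm v w, and_comm] at h2⟩
  loopless := by refine ⟨?_⟩; rintro v ⟨h, -⟩; exact h rfl

instance {a b : Prop} [Decidable a] [Decidable b] : Decidable (Xor' a b) :=
  inferInstanceAs (Decidable ((a ∧ ¬b) ∨ (b ∧ ¬a)))

instance [DecidableEq V] (G : SimpleGraph V) [DecidableRel G.Adj] (u : V) :
    DecidableRel (localComp G u).Adj :=
  fun v w => inferInstanceAs (Decidable (v ≠ w ∧ Xor' (G.Adj v w) (G.Adj u v ∧ G.Adj u w)))

/-- The pivot of `G` along the edge `uv`. -/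
def pivot (G : SimpleGraph V) (u v : V) : SimpleGraph V :=
  localComp (localComp (localComp G u) v) u

instance [DecidableEq V] (G : SimpleGraph V) [DecidableRel G.Adj] (u v : V) :
    DecidableRel (pivot G u v).Adj :=
  inferInstanceAs (DecidableRel (localComp (localComp (localComp G u) v) u).Adj)

/-- The closed neighbourhood of a vertex. -/
def clNbhd [Fintype V] [DecidableEq V] (G : SimpleGraph V) [DecidableRel G.Adj] (v : V) :
    Finset V :=
  insert v (nbhd G v)

/-!
Work over GF(2), with adjacency vectors `a` and closed-neighbourhood vectors `c`. Off the diagonal,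
local complementation at `u` adds the rank-one matrix `aᵤ aᵤᵀ` to the adjacency matrix. Along the
three complementations of the pivot on `uv`, the vectors of the successive centres are `aᵤ`,
`aᵤ + cᵥ` and `cᵥ + eᵤ`, with `eᵤ = cᵤ + aᵤ` the indicator of `u`. The three rank-one matrices add
up to `cᵤ cᵥᵀ + cᵥ cᵤᵀ + eᵤ eᵤᵀ`; the last term is supported on the diagonal, where the others
cancel. Reading off row `w` gives the theorem.
-/

/-- The closed neighbourhood `N_G[v]` in a graph on an arbitrary vertex type, as a `Set`; the
counterpart of `clNbhd` without finiteness. -/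
def closedNeighborSet (G : SimpleGraph V) (v : V) : Set V :=
  insert v (G.neighborSet v)

section Adjacency

variable {G : SimpleGraph V} {u v : V}

theorem mem_closedNeighborSet {x : V} : x ∈ closedNeighborSet G v ↔ x = v ∨ G.Adj v x :=
  Iff.rfl

theorem localComp_adj {x y : V} :
    (localComp G u).Adj x y ↔ x ≠ y ∧ Xor (G.Adj x y) (G.Adj u x ∧ G.Adj u y) :=
  Iff.rfl

theorem localComp_adj_self {x : V} : (localComp G u).Adj u x ↔ G.Adj u x := by
  rw [localComp_adj]
  grind [G.irrefl]

theorem localComp_adj_of_adj (huv : G.Adj u v) {x : V} :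
    (localComp G u).Adj v x ↔ Xor (G.Adj u x) (x ∈ closedNeighborSet G v) := by
  rw [localComp_adj, mem_closedNeighborSet]
  grind [G.irrefl]

theorem localComp_localComp_adj (huv : G.Adj u v) {x : V} :
    (localComp (localComp G u) v).Adj u x ↔ x ≠ u ∧ x ∈ closedNeighborSet G v := by
  have hvu : (localComp G u).Adj v u := (localComp_adj_self.2 huv).symm
  rw [localComp_adj_of_adj hvu, localComp_adj_of_adj huv, mem_closedNeighborSet (v := u),
    localComp_adj_self]
  have huv' : u ∈ closedNeighborSet G v := .inr huv.symm
  grind [G.irrefl]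

theorem pivot_adj (huv : G.Adj u v) {w x : V} :
    (pivot G u v).Adj w x ↔
      Xor (G.Adj w x)
        (Xor (w ∈ closedNeighborSet G u ∧ x ∈ closedNeighborSet G v)
          (w ∈ closedNeighborSet G v ∧ x ∈ closedNeighborSet G u)) := by
  by_cases hwx : w = x
  · simp [hwx, and_comm]
  have hsum : (pivot G u v).Adj w x ↔
      Xor (Xor (Xor (G.Adj w x) (G.Adj u w ∧ G.Adj u x))
        (Xor (G.Adj u w) (w ∈ closedNeighborSet G v) ∧
          Xor (G.Adj u x) (x ∈ closedNeighborSet G v)))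
        ((w ≠ u ∧ w ∈ closedNeighborSet G v) ∧ (x ≠ u ∧ x ∈ closedNeighborSet G v)) := by
    rw [pivot, localComp_adj, localComp_localComp_adj huv, localComp_localComp_adj huv,
      localComp_adj, localComp_adj_of_adj huv, localComp_adj_of_adj huv, localComp_adj]
    simp only [ne_eq, hwx, not_false_eq_true, true_and]
  rw [hsum, mem_closedNeighborSet (v := u), mem_closedNeighborSet (v := u)]
  have huv' : u ∈ closedNeighborSet G v := .inr huv.symm
  grind [G.irrefl]

theorem nbhd_pivot_general (huv : G.Adj u v) (w : V) :
    (w ∈ closedNeighborSet G u ∩ closedNeighborSet G v →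
      (pivot G u v).neighborSet w =
        G.neighborSet w ∆ closedNeighborSet G u ∆ closedNeighborSet G v) ∧
    (w ∈ closedNeighborSet G u \ closedNeighborSet G v →
      (pivot G u v).neighborSet w = G.neighborSet w ∆ closedNeighborSet G v) ∧
    (w ∈ closedNeighborSet G v \ closedNeighborSet G u →
      (pivot G u v).neighborSet w = G.neighborSet w ∆ closedNeighborSet G u) ∧
    (w ∉ closedNeighborSet G u ∪ closedNeighborSet G v →
      (pivot G u v).neighborSet w = G.neighborSet w) := by
  refine ⟨?_, ?_, ?_, ?_⟩ <;> intro hw <;> ext x <;>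
    rw [SimpleGraph.mem_neighborSet, pivot_adj huv] <;> grind [SimpleGraph.mem_neighborSet]

end Adjacency

section Finite

variable [Fintype V] [DecidableEq V] (G : SimpleGraph V) [DecidableRel G.Adj] (v : V)

theorem coe_nbhd : (nbhd G v : Set V) = G.neighborSet v := by
  ext x
  simp [nbhd]

theorem coe_clNbhd : (clNbhd G v : Set V) = closedNeighborSet G v := by
  rw [clNbhd, coe_insert, coe_nbhd, closedNeighborSet]

end Finite

theorem nbhd_pivot [Fintype V] [DecidableEq V] (G : SimpleGraph V) [DecidableRel G.Adj]
    (u v : V) (huv : G.Adj u v) (w : V) :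
    (w ∈ clNbhd G u ∩ clNbhd G v →
      nbhd (pivot G u v) w = nbhd G w ∆ clNbhd G u ∆ clNbhd G v) ∧
    (w ∈ clNbhd G u \ clNbhd G v →
      nbhd (pivot G u v) w = nbhd G w ∆ clNbhd G v) ∧
    (w ∈ clNbhd G v \ clNbhd G u →
      nbhd (pivot G u v) w = nbhd G w ∆ clNbhd G u) ∧
    (w ∉ clNbhd G u ∪ clNbhd G v →
      nbhd (pivot G u v) w = nbhd G w) := by
  simpa only [← mem_coe, ← coe_inj, coe_inter, coe_sdiff, coe_union, coe_symmDiff, coe_nbhd,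
    coe_clNbhd] using nbhd_pivot_general huv w
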